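/- arXiv:1912.06412 — 2 statements merged into one kernel-verified Lean document; each statement's English description precedes it below -/
import Mathlib

section
/- Let 0 < q < 1/2, p = 1 - q, λ = q/p, s = 4pq, and for integers A ≥ z ≥ 1 define P_A(z) = (I_{4pq}(z, 1/2) − λ^{A+1}) / (1 − λ^{A+1}). Then for any function A : ℕ → ℕ with A(z) ≥ z for all z, we have P_{A(z)}(z) ~ s^z / √(π (1−s) z) as z → ∞; that is, P_{A(z)}(z) · √(π (1−s) z) / s^z tends to 1 as z → ∞, with an asymptotic independent of the choice of A. -/
open scoped BigOperators
open Filter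

/-- The Beta function `B(a,b) = ∫_0^1 t^(a-1) (1-t)^(b-1) dt`. -/
noncomputable def Beta (a b : ℝ) : ℝ :=
  ∫ t in (0:ℝ)..1, t ^ (a - 1) * (1 - t) ^ (b - 1)

/-- The regularized incomplete Beta function
`I_x(a,b) = (1/B(a,b)) ∫_0^x t^(a-1) (1-t)^(b-1) dt`. -/
noncomputable def regBeta (x a b : ℝ) : ℝ :=
  (∫ t in (0:ℝ)..x, t ^ (a - 1) * (1 - t) ^ (b - 1)) / Beta a b

/-!
As `n → ∞` the mass of `t ^ n` on `[0, x]` concentrates at `x`, so the incomplete Beta integral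
`∫_0^x t^(n-1) (1-t)^(b-1) dt` is equivalent to `x^n (1-x)^(b-1) / n`. Euler's limit formula for the
Gamma function says precisely that `B(n, b)` is equivalent to `Γ(b) n^(-b)`. Dividing, with
`b = 1/2` and `Γ(1/2) = √π`, gives `I_s(n, 1/2) ~ s^n / √(π (1-s) n)`. Since `2p > 1`, we have
`λ = q/p < 4pq = s`, so the powers `λ^(A(z)+1) ≤ λ^z` are exponentially smaller than this
and affect neither the numerator nor the denominator of `P_A(z)`.
-/

open Asymptotics MeasureTheory Topology

theorem tendsto_integral_pow_smul {E : Type*} [NormedAddCommGroup E] [NormedSpace ℝ E]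
    [CompleteSpace E] {f : ℝ → E} {x : ℝ} (hx : 0 < x) (hf : IntervalIntegrable f volume 0 x)
    (hfx : ContinuousWithinAt f (Set.Icc 0 x) x) :
    Tendsto (fun n : ℕ => ((n + 1) / x ^ (n + 1)) • ∫ t in (0 : ℝ)..x, t ^ n • f t)
      atTop (𝓝 (f x)) := by
  have hx_mem : x ∈ closure (interior (Set.Icc 0 x)) := by
    rw [interior_Icc, closure_Ioo hx.ne]
    exact Set.right_mem_Icc.2 hx.le
  have hpeak := tendsto_setIntegral_pow_smul_of_unique_maximum_of_isCompact_of_integrableOn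
    (μ := volume) isCompact_Icc continuousOn_id (fun t ht htx => lt_of_le_of_ne ht.2 htx)
    (fun t ht => ht.1) hx hx_mem
    ((intervalIntegrable_iff_integrableOn_Icc_of_le hx.le).1 hf) hfx
  refine hpeak.congr fun n => ?_
  simp only [id_eq, integral_Icc_eq_integral_Ioc, ← intervalIntegral.integral_of_le hx.le,
    integral_pow, zero_pow n.succ_ne_zero, sub_zero, inv_div]

theorem tendsto_div_pow_mul_incompleteBeta {x : ℝ} (hx0 : 0 < x) (hx1 : x < 1) (b : ℝ) :
    Tendsto (fun n : ℕ =>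
        n / x ^ n * ∫ t in (0 : ℝ)..x, t ^ ((n : ℝ) - 1) * (1 - t) ^ (b - 1))
      atTop (𝓝 ((1 - x) ^ (b - 1))) := by
  have hcont : ContinuousOn (fun t : ℝ => (1 - t) ^ (b - 1)) (Set.Icc 0 x) :=
    (by fun_prop : ContinuousOn (fun t : ℝ => 1 - t) _).rpow_const
      fun t ht => Or.inl (by linarith [ht.2])
  have hlim := tendsto_integral_pow_smul hx0 (hcont.intervalIntegrable_of_Icc hx0.le)
    (hcont x (Set.right_mem_Icc.2 hx0.le))
  refine (tendsto_add_atTop_iff_nat 1).1 (hlim.congr fun n => ?_)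
  simp only [Nat.cast_add, Nat.cast_one, add_sub_cancel_right, Real.rpow_natCast, smul_eq_mul]

theorem ofReal_Beta (a b : ℝ) : (Beta a b : ℂ) = Complex.betaIntegral a b := by
  rw [Beta, Complex.betaIntegral, ← intervalIntegral.integral_ofReal]
  refine intervalIntegral.integral_congr fun t ht => ?_
  rw [Set.uIcc_of_le zero_le_one] at ht
  push_cast [Complex.ofReal_cpow ht.1, Complex.ofReal_cpow (sub_nonneg.2 ht.2)]
  rfl

theorem rpow_mul_Beta_natCast_add_one {b : ℝ} (hb : 0 < b) (n : ℕ) :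
    n ^ b * Beta (n + 1) b = Real.GammaSeq b n := by
  have h := Complex.GammaSeq_eq_betaIntegral_of_re_pos (s := b) (by simpa using hb) n
  rw [Complex.betaIntegral_symm, Complex.GammaSeq] at h
  apply Complex.ofReal_injective
  push_cast [Real.GammaSeq, ofReal_Beta, Complex.ofReal_cpow (Nat.cast_nonneg n)]
  exact h.symm

theorem tendsto_rpow_mul_Beta_natCast {b : ℝ} (hb : 0 < b) :
    Tendsto (fun n : ℕ => (n : ℝ) ^ b * Beta n b) atTop (𝓝 (Real.Gamma b)) := by
  have hratio : Tendsto (fun n : ℕ => ((n + 1 : ℝ) / n) ^ b) atTop (𝓝 1) := by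
    have h := (tendsto_natCast_div_add_atTop (1 : ℝ)).inv₀ one_ne_zero
    simpa using h.rpow_const (p := b) (Or.inl (by simp))
  have hEuler := hratio.mul (Real.GammaSeq_tendsto_Gamma b)
  rw [one_mul] at hEuler
  refine (tendsto_add_atTop_iff_nat 1).1 (hEuler.congr' ?_)
  filter_upwards [eventually_gt_atTop 0] with n hn
  have hnb : (n : ℝ) ^ b ≠ 0 := (Real.rpow_pos_of_pos (Nat.cast_pos.2 hn) b).ne'
  rw [← rpow_mul_Beta_natCast_add_one hb, Real.div_rpow (by positivity) (by positivity)]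
  push_cast
  field_simp

theorem regBeta_natCast_isEquivalent {x b : ℝ} (hx0 : 0 < x) (hx1 : x < 1) (hb : 0 < b) :
    (fun n : ℕ => regBeta x n b) ~[atTop]
      fun n => (1 - x) ^ (b - 1) / Real.Gamma b * (x ^ n * (n : ℝ) ^ (b - 1)) := by
  have hlim := (tendsto_div_pow_mul_incompleteBeta hx0 hx1 b).div (tendsto_rpow_mul_Beta_natCast hb)
    (Real.Gamma_pos_of_pos hb).ne'
  have hconst : (1 - x) ^ (b - 1) / Real.Gamma b ≠ 0 := by
    have := sub_pos.2 hx1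
    positivity
  have hmul := ((isEquivalent_const_iff_tendsto hconst).2 hlim).mul
    (IsEquivalent.refl (u := fun n : ℕ => x ^ n * (n : ℝ) ^ (b - 1)))
  refine hmul.congr_left ?_
  filter_upwards [eventually_gt_atTop 0] with n hn
  have hn0 : (0 : ℝ) < n := Nat.cast_pos.2 hn
  have hnb : (n : ℝ) ^ b ≠ 0 := (Real.rpow_pos_of_pos hn0 b).ne'
  simp only [Pi.mul_apply, Pi.div_apply, regBeta, Real.rpow_sub_one hn0.ne']
  field_simp

theorem regBeta_natCast_one_half_isEquivalent {x : ℝ} (hx0 : 0 < x) (hx1 : x < 1) :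
    (fun n : ℕ => regBeta x n (1 / 2)) ~[atTop]
      fun n => x ^ n / √(Real.pi * (1 - x) * n) := by
  convert regBeta_natCast_isEquivalent hx0 hx1 one_half_pos using 2 with n
  have hx : 0 ≤ 1 - x := by linarith
  rw [Real.Gamma_one_half_eq, show (1 / 2 - 1 : ℝ) = -(1 / 2) by norm_num,
    Real.rpow_neg hx, Real.rpow_neg n.cast_nonneg, ← Real.sqrt_eq_rpow, ← Real.sqrt_eq_rpow,
    Real.sqrt_mul (by positivity), Real.sqrt_mul Real.pi_pos.le]
  field_simp

theorem isLittleO_pow_pow_mul_rpow {r x : ℝ} (h : |r| < x) (c : ℝ) :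
    (fun n : ℕ => r ^ n) =o[atTop] fun n : ℕ => x ^ n * (n : ℝ) ^ c := by
  obtain ⟨k, hk⟩ := exists_nat_ge (-c)
  have hpow : (fun n : ℕ => (n : ℝ) ^ k * r ^ n) =o[atTop] fun n => x ^ n :=
    isLittleO_pow_const_mul_const_pow_const_pow_of_norm_lt k h
  have hrpow : (fun n : ℕ => ((n : ℝ) ^ k)⁻¹) =O[atTop] fun n => (n : ℝ) ^ c := by
    refine IsBigO.of_bound' ?_
    filter_upwards [eventually_ge_atTop 1] with n hn
    rw [← Real.rpow_natCast, ← Real.rpow_neg n.cast_nonneg,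
      Real.norm_of_nonneg (by positivity), Real.norm_of_nonneg (by positivity)]
    exact Real.rpow_le_rpow_of_exponent_le (mod_cast hn) (by linarith)
  refine (hpow.mul_isBigO hrpow).congr' ?_ .rfl
  filter_upwards [eventually_gt_atTop 0] with n hn
  have : (n : ℝ) ≠ 0 := by positivity
  field_simp

theorem isLittleO_pow_regBeta_natCast {r x b : ℝ} (hrx : |r| < x) (hx1 : x < 1) (hb : 0 < b) :
    (fun n : ℕ => r ^ n) =o[atTop] fun n : ℕ => regBeta x n b := by
  have hx0 : 0 < x := (abs_nonneg r).trans_lt hrx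
  have hconst : (1 - x) ^ (b - 1) / Real.Gamma b ≠ 0 := by
    have := sub_pos.2 hx1
    positivity
  exact ((isLittleO_pow_pow_mul_rpow hrx (b - 1)).const_mul_right hconst).trans_isEquivalent
    (regBeta_natCast_isEquivalent hx0 hx1 hb).symm

theorem isEquivalent_sub_pow_div_one_sub_pow {𝕜 : Type*} [NormedField 𝕜] {u : ℕ → 𝕜} {r : 𝕜}
    {k : ℕ → ℕ} (hr : ‖r‖ < 1) (hk : ∀ n, n ≤ k n) (hru : (fun n => r ^ n) =o[atTop] u) :
    (fun n => (u n - r ^ k n) / (1 - r ^ k n)) ~[atTop] u := by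
  have hnum : (fun n => r ^ k n) =o[atTop] u := by
    refine (IsBigO.of_bound' (.of_forall fun n => ?_)).trans_isLittleO hru
    simpa only [norm_pow] using pow_le_pow_of_le_one (norm_nonneg r) hr.le (hk n)
  have hden : (fun n => 1 - r ^ k n) ~[atTop] Function.const ℕ 1 := by
    rw [isEquivalent_const_iff_tendsto one_ne_zero]
    simpa using ((tendsto_pow_atTop_nhds_zero_of_norm_lt_one hr).comp
      (tendsto_atTop_mono hk tendsto_id)).const_sub 1
  exact ((IsEquivalent.refl.sub_isLittleO hnum).div hden).congr_right
    (.of_forall fun n => div_one (u n))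

theorem div_lt_four_mul_mul {p q : ℝ} (hq : 0 < q) (hp : 1 / 2 < p) : q / p < 4 * p * q := by
  rw [div_lt_iff₀ (by linarith)]
  have hp_sq : 1 < 4 * p * p := by nlinarith
  nlinarith [mul_lt_mul_of_pos_right hp_sq hq]

/-- asymptotics of `P_{A(z)}(z)` as `z → ∞`, uniform in the choice of `A`. -/
theorem nakamoto_probability_asymptotics (q p lam s : ℝ) (hq0 : 0 < q) (hq2 : q < 1 / 2)
    (hp : p = 1 - q) (hlam : lam = q / p) (hs : s = 4 * p * q)
    (A : ℕ → ℕ) (hA : ∀ z, z ≤ A z) :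
    Tendsto (fun z : ℕ =>
        ((regBeta (4 * p * q) (z : ℝ) (1 / 2) - lam ^ (A z + 1)) / (1 - lam ^ (A z + 1)))
          * Real.sqrt (Real.pi * (1 - s) * (z : ℝ)) / s ^ z)
      atTop (nhds 1) := by
  have hp2 : 1 / 2 < p := by linarith
  have hs0 : 0 < s := by rw [hs]; positivity
  have hs1 : s < 1 := by rw [hs]; nlinarith
  have hlams : |lam| < s := by
    rw [hlam, hs, abs_of_pos (by positivity)]
    exact div_lt_four_mul_mul hq0 hp2
  have hP : (fun z : ℕ => (regBeta s z (1 / 2) - lam ^ (A z + 1)) / (1 - lam ^ (A z + 1)))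
      ~[atTop] fun z : ℕ => s ^ z / √(Real.pi * (1 - s) * z) :=
    (isEquivalent_sub_pow_div_one_sub_pow (hlams.trans hs1) (fun z => Nat.le_succ_of_le (hA z))
      (isLittleO_pow_regBeta_natCast hlams hs1 one_half_pos)).trans
      (regBeta_natCast_one_half_isEquivalent hs0 hs1)
  have hne : ∀ᶠ z : ℕ in atTop, s ^ z / √(Real.pi * (1 - s) * z) ≠ 0 := by
    filter_upwards [eventually_gt_atTop 0] with z hz
    have := sub_pos.2 hs1
    positivity
  rw [← hs]
  exact ((isEquivalent_iff_tendsto_one hne).1 hP).congr fun z => div_div_eq_mul_div _ _ _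
end

section
/- Let 0 < q < 1/2, p = 1 - q, λ = q/p, let z ≥ 1 and A ≥ z be integers, and write [A+1] = (1 − λ^{A+1})/(1 − λ). Then (A+1)/((p−q)(1 − λ^{A+1})) − p^{z−1} q^z / ((p−q) B(z,z)) + ( z/p − 2(A+1)/((p−q)(1 − λ^{A+1})) ) · I_q(z, z) = (z/(2p)) I_{4pq}(z, 1/2) + ( (A+1) / ( p (1 − λ)^2 [A+1] ) ) I_{(p−q)^2}(1/2, z) − p^{z−1} q^z / ( p (1 − λ) B(z,z) ). (This identifies the two expressions for the expected duration E[T_A]/τ₀ − 1/q of the A-Nakamoto double spend attack given, respectively, in the duration Proposition and in the main Theorem.) -/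
open scoped BigOperators
open Filter

/-!
The substitution `s = 4t(1 - t)`, for which `1 - s = (1 - 2t)²`, turns the integral of
`B(a, 1/2)` over `[0, 4x(1 - x)]` into `4^a` times that of `B(a, a)` over `[0, x]`, for `x ≤ 1/2`.
Normalizing by the value at `x = 1/2`, where `I_{1/2}(a, a) = 1/2` by symmetry, gives
`I_{4x(1-x)}(a, 1/2) = 2 I_x(a, a)`, and the reflection `I_{1-y}(b, a) = 1 - I_y(a, b)` then gives
`I_{(1-2x)²}(1/2, a) = 1 - 2 I_x(a, a)`. At `x = q`, `a = z`, where `4x(1 - x) = 4pq` and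
`1 - 2x = p - q`, the two durations agree as linear expressions in `I_q(z, z)`, because
`p(1 - λ) = p - q`.
-/

section RegBeta

open MeasureTheory Set

variable {a b x : ℝ}

theorem intervalIntegrable_rpow_mul_one_sub_rpow (ha : 0 < a) (hb : 0 < b) :
    IntervalIntegrable (fun t : ℝ ↦ t ^ (a - 1) * (1 - t) ^ (b - 1)) volume 0 1 := by
  have hcomplex := Complex.betaIntegral_convergent (u := a) (v := b) ha hb
  refine hcomplex.norm.congr_uIoo fun t ht ↦ ?_
  rw [uIoo_of_le zero_le_one] at ht
  have hcast : (1 : ℂ) - t = (1 - t : ℝ) := by push_cast; rfl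
  simp [hcast, Complex.norm_cpow_eq_rpow_re_of_pos ht.1,
    Complex.norm_cpow_eq_rpow_re_of_pos (sub_pos.2 ht.2), -Complex.ofReal_sub]

theorem Beta_pos (ha : 0 < a) (hb : 0 < b) : 0 < Beta a b := by
  refine intervalIntegral.intervalIntegral_pos_of_pos_on
    (intervalIntegrable_rpow_mul_one_sub_rpow ha hb) (fun t ht ↦ ?_) one_pos
  exact mul_pos (Real.rpow_pos_of_pos ht.1 _) (Real.rpow_pos_of_pos (sub_pos.2 ht.2) _)

theorem integral_rpow_mul_one_sub_rpow_reflect (a b x : ℝ) :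
    ∫ t in (0 : ℝ)..(1 - x), t ^ (b - 1) * (1 - t) ^ (a - 1) =
      ∫ t in x..1, t ^ (a - 1) * (1 - t) ^ (b - 1) := by
  have h := intervalIntegral.integral_comp_sub_left (a := x) (b := 1)
    (fun t : ℝ ↦ t ^ (b - 1) * (1 - t) ^ (a - 1)) 1
  simpa [mul_comm] using h.symm

theorem Beta_comm (a b : ℝ) : Beta a b = Beta b a := by
  simpa [Beta] using integral_rpow_mul_one_sub_rpow_reflect b a 0

theorem regBeta_one_sub (ha : 0 < a) (hb : 0 < b) (hx₀ : 0 ≤ x) (hx₁ : x ≤ 1) :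
    regBeta (1 - x) b a = 1 - regBeta x a b := by
  have hint := intervalIntegrable_rpow_mul_one_sub_rpow ha hb
  have hx : x ∈ uIcc 0 1 := mem_uIcc_of_le hx₀ hx₁
  have hsplit : (∫ t in (0 : ℝ)..x, t ^ (a - 1) * (1 - t) ^ (b - 1)) +
      ∫ t in x..1, t ^ (a - 1) * (1 - t) ^ (b - 1) = Beta a b :=
    intervalIntegral.integral_add_adjacent_intervals
      (hint.mono_set (uIcc_subset_uIcc_left hx)) (hint.mono_set (uIcc_subset_uIcc_right hx))
  rw [regBeta, regBeta, integral_rpow_mul_one_sub_rpow_reflect, Beta_comm b a,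
    eq_sub_iff_add_eq', ← add_div, hsplit, div_self (Beta_pos ha hb).ne']

theorem regBeta_half_self (ha : 0 < a) : regBeta (1 / 2) a a = 1 / 2 := by
  have h := regBeta_one_sub ha ha (x := 1 / 2) (by norm_num) (by norm_num)
  rw [sub_half] at h
  linarith

theorem rpow_mul_one_sub_rpow_four_mul_mul_deriv (a : ℝ) (hx₀ : 0 < x) (hx : x < 1 / 2) :
    (4 * x * (1 - x)) ^ (a - 1) * (1 - 4 * x * (1 - x)) ^ ((1 / 2 : ℝ) - 1) * (4 * (1 - 2 * x)) =
      4 ^ a * (x ^ (a - 1) * (1 - x) ^ (a - 1)) := by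
  have hx₁ : 0 < 1 - x := by linarith
  have hx₂ : 0 < 1 - 2 * x := by linarith
  have hroot : (1 - 4 * x * (1 - x)) ^ ((1 / 2 : ℝ) - 1) = (1 - 2 * x)⁻¹ := by
    rw [show 1 - 4 * x * (1 - x) = (1 - 2 * x) ^ (2 : ℝ) by rw [Real.rpow_two]; ring,
      ← Real.rpow_mul hx₂.le, ← Real.rpow_neg_one]
    norm_num
  have hpow : (4 * x * (1 - x)) ^ (a - 1) * 4 = 4 ^ a * (x ^ (a - 1) * (1 - x) ^ (a - 1)) := by
    rw [Real.mul_rpow (by positivity) hx₁.le, Real.mul_rpow four_pos.le hx₀.le,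
      Real.rpow_sub_one four_ne_zero]
    ring
  rw [hroot, ← hpow, mul_assoc, mul_left_comm _ 4, inv_mul_cancel₀ hx₂.ne', mul_one]

theorem integral_rpow_mul_one_sub_rpow_four_mul (a : ℝ) (hx₀ : 0 ≤ x) (hx : x ≤ 1 / 2) :
    ∫ s in (0 : ℝ)..(4 * x * (1 - x)), s ^ (a - 1) * (1 - s) ^ ((1 / 2 : ℝ) - 1) =
      4 ^ a * ∫ t in (0 : ℝ)..x, t ^ (a - 1) * (1 - t) ^ (a - 1) := by
  have hderiv (t : ℝ) : HasDerivAt (fun t : ℝ ↦ 4 * t * (1 - t)) (4 * (1 - 2 * t)) t :=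
    (((hasDerivAt_id' t).const_mul 4).mul ((hasDerivAt_id' t).const_sub 1)).congr_deriv (by ring)
  have hsubst := intervalIntegral.integral_comp_mul_deriv_of_deriv_nonneg (a := 0) (b := x)
    (g := fun s : ℝ ↦ s ^ (a - 1) * (1 - s) ^ ((1 / 2 : ℝ) - 1))
    (HasDerivAt.continuousOn fun t _ ↦ hderiv t) (fun t _ ↦ hderiv t) (fun t ht ↦ by
      rw [max_eq_right hx₀] at ht
      linarith [ht.2])
  simp only [mul_zero, zero_mul] at hsubst
  rw [← hsubst, ← intervalIntegral.integral_const_mul]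
  exact intervalIntegral.integral_congr_Ioo_of_le hx₀ fun t ht ↦
    rpow_mul_one_sub_rpow_four_mul_mul_deriv a ht.1 (ht.2.trans_le hx)

theorem regBeta_four_mul_mul_one_sub (ha : 0 < a) (hx₀ : 0 ≤ x) (hx : x ≤ 1 / 2) :
    regBeta (4 * x * (1 - x)) a (1 / 2) = 2 * regBeta x a a := by
  have hB : 0 < Beta a a := Beta_pos ha ha
  have hhalf : ∫ t in (0 : ℝ)..(1 / 2), t ^ (a - 1) * (1 - t) ^ (a - 1) = Beta a a / 2 := by
    have h := regBeta_half_self ha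
    rw [regBeta, div_eq_iff hB.ne'] at h
    linarith
  have hBeta : Beta a (1 / 2) = 4 ^ a * (Beta a a / 2) := by
    rw [← hhalf, ← integral_rpow_mul_one_sub_rpow_four_mul a (by norm_num) le_rfl, Beta]
    norm_num
  rw [regBeta, regBeta, hBeta, integral_rpow_mul_one_sub_rpow_four_mul a hx₀ hx]
  field_simp

theorem regBeta_one_sub_two_mul_sq (ha : 0 < a) (hx₀ : 0 ≤ x) (hx : x ≤ 1 / 2) :
    regBeta ((1 - 2 * x) ^ 2) (1 / 2) a = 1 - 2 * regBeta x a a := by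
  rw [← regBeta_four_mul_mul_one_sub ha hx₀ hx,
    ← regBeta_one_sub ha one_half_pos (by nlinarith) (by nlinarith [sq_nonneg (1 - 2 * x)])]
  congr 1
  ring

end RegBeta

theorem nakamoto_duration_identity_general (q p lam z : ℝ) (A : ℕ) (hq0 : 0 ≤ q) (hq2 : q < 1 / 2)
    (hp : p = 1 - q) (hlam : lam = q / p) (hz : 0 < z) :
    ((A : ℝ) + 1) / ((p - q) * (1 - lam ^ (A + 1)))
        - p ^ (z - 1) * q ^ z / ((p - q) * Beta z z)
        + (z / p - 2 * ((A : ℝ) + 1) / ((p - q) * (1 - lam ^ (A + 1)))) * regBeta q z z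
      = z / (2 * p) * regBeta (4 * p * q) z (1 / 2)
        + ((A : ℝ) + 1) / (p * (1 - lam) ^ 2 * ((1 - lam ^ (A + 1)) / (1 - lam)))
            * regBeta ((p - q) ^ 2) (1 / 2) z
        - p ^ (z - 1) * q ^ z / (p * (1 - lam) * Beta z z) := by
  have hp0 : p ≠ 0 := by linarith
  have hpq : p * (1 - lam) = p - q := by rw [hlam]; field_simp
  have hlam1 : 1 - lam ≠ 0 := right_ne_zero_of_mul (a := p) (by linarith)
  have hden : p * (1 - lam) ^ 2 * ((1 - lam ^ (A + 1)) / (1 - lam)) =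
      (p - q) * (1 - lam ^ (A + 1)) := by
    rw [← hpq]; field_simp
  have hI₁ : regBeta (4 * p * q) z (1 / 2) = 2 * regBeta q z z := by
    rw [← regBeta_four_mul_mul_one_sub hz hq0 hq2.le, hp, mul_right_comm]
  have hI₂ : regBeta ((p - q) ^ 2) (1 / 2) z = 1 - 2 * regBeta q z z := by
    rw [← regBeta_one_sub_two_mul_sq hz hq0 hq2.le, hp, sub_sub, ← two_mul]
  rw [hI₁, hI₂, hden, hpq]
  ring

/-- equality of the two expressions for the expected duration
`E[T_A]/τ₀ − 1/q` of the `A`-Nakamoto double spend attack. -/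
theorem nakamoto_duration_identity (q p lam : ℝ) (hq0 : 0 < q) (hq2 : q < 1 / 2)
    (hp : p = 1 - q) (hlam : lam = q / p) (z A : ℕ) (hz : 1 ≤ z) (hAz : z ≤ A) :
    ((A : ℝ) + 1) / ((p - q) * (1 - lam ^ (A + 1)))
        - p ^ (z - 1) * q ^ z / ((p - q) * Beta (z : ℝ) (z : ℝ))
        + ((z : ℝ) / p - 2 * ((A : ℝ) + 1) / ((p - q) * (1 - lam ^ (A + 1))))
            * regBeta q (z : ℝ) (z : ℝ)
      = (z : ℝ) / (2 * p) * regBeta (4 * p * q) (z : ℝ) (1 / 2)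
        + ((A : ℝ) + 1) / (p * (1 - lam) ^ 2 * ((1 - lam ^ (A + 1)) / (1 - lam)))
            * regBeta ((p - q) ^ 2) (1 / 2) (z : ℝ)
        - p ^ (z - 1) * q ^ z / (p * (1 - lam) * Beta (z : ℝ) (z : ℝ)) := by
  simpa only [← Nat.cast_pred hz, Real.rpow_natCast] using
    nakamoto_duration_identity_general q p lam z A hq0.le hq2 hp hlam (Nat.cast_pos.2 hz)
end
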